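/- Let d ≥ 2 be an integer, let V be a set, and let c be a 2-coloring of the complete digraph on V. Suppose there exists X ⊆ V with |X| = d + 1 such that c(x,x) = red for all x ∈ X and c(u,v) = c(v,u) = blue for all distinct u,v ∈ X. Then V can be covered by at most d red d-dominating sets together with one blue d-dominating set; in particular, V can be covered by at most d + 1 monochromatic d-dominating subgraphs. -/

import Mathlib

/-- The two colors for 2-colorings of complete digraphs. -/
inductive Color where
  | red : Color
  | blue : Color

/-- `U'`, together with the color `j`, is a `j`-colored `d`-dominating set: every finite
`S ⊆ U'` with `1 ≤ |S| ≤ d` has a common out-neighbor `w ∈ U'` with all edges of color `j`. -/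
def IsMonoDom {V : Type*} (c : V → V → Color) (d : ℕ) (j : Color) (U' : Set V) : Prop :=
  ∀ S : Finset V, ↑S ⊆ U' → S.Nonempty → S.card ≤ d →
    ∃ w ∈ U', ∀ s ∈ S, c s w = j

/-! Fix `x₀ ∈ X` and `d` further vertices `Y ⊆ X`. The red in-neighborhood of each `y ∈ Y` is
dominated by `y` itself, through its red loop. A vertex in none of these sends blue edges to all of
`Y`, and the set of such vertices together with `Y` is blue `d`-dominating: a set `S` of at most
`d` of its vertices either omits some `y ∈ Y`, which then dominates `S`, or equals `Y`, which is
dominated by `x₀`. -/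

/-- The in-neighborhood of `y` in color `j`: all `v` (possibly `y` itself) whose edge into `y` has
color `j`. In red, these are the `d` sets of the cover; in blue, their complements. -/
def colorInNbhd {V : Type*} (c : V → V → Color) (j : Color) (y : V) : Set V :=
  {v | c v y = j}

section

variable {V : Type*} {c : V → V → Color} {j : Color} {d : ℕ}

theorem compl_colorInNbhd_red (c : V → V → Color) (y : V) :
    (colorInNbhd c Color.red y)ᶜ = colorInNbhd c Color.blue y := by
  ext v
  cases h : c v y <;> simp [colorInNbhd, h]

theorem iUnion_colorInNbhd_red_union_iInter_blue {ι : Sort*} (c : V → V → Color) (y : ι → V) :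
    (⋃ i, colorInNbhd c Color.red (y i)) ∪ ⋂ i, colorInNbhd c Color.blue (y i) = Set.univ := by
  simp only [← compl_colorInNbhd_red, ← Set.compl_iUnion, Set.union_compl_self]

theorem isMonoDom_colorInNbhd {y : V} (hy : c y y = j) : IsMonoDom c d j (colorInNbhd c j y) :=
  fun _ hS _ _ => ⟨y, hy, fun _ hs => hS hs⟩

theorem isMonoDom_iInter_colorInNbhd_union {Y : Finset V} {x₀ : V} (hd : d ≤ Y.card)
    (hY : (Y : Set V).Pairwise fun u v => c u v = j)
    (hfrom : ∀ y ∈ Y, c x₀ y = j) (hto : ∀ y ∈ Y, c y x₀ = j) :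
    IsMonoDom c d j ((⋂ y : Y, colorInNbhd c j y) ∪ Y) := by
  intro S hS _ hSd
  by_cases hYS : Y ⊆ S
  · obtain rfl : Y = S := Finset.eq_of_subset_of_card_le hYS (hSd.trans hd)
    exact ⟨x₀, Or.inl (Set.mem_iInter.mpr fun y => hfrom y y.2), hto⟩
  · obtain ⟨y, hyY, hyS⟩ := Finset.not_subset.mp hYS
    refine ⟨y, Or.inr hyY, fun s hs => ?_⟩
    rcases hS hs with hs_inter | hsY
    · exact Set.mem_iInter.mp hs_inter ⟨y, hyY⟩
    · exact hY hsY hyY (ne_of_mem_of_not_mem hs hyS)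

theorem cover_with_blue_clique_general {X : Finset V} {x₀ : V} (hX : d < X.card) (hx₀ : x₀ ∈ X)
    (hloop : ∀ x ∈ X, x ≠ x₀ → c x x = Color.red)
    (hblue : (X : Set V).Pairwise fun u v => c u v = Color.blue) :
    ∃ (W : Fin d → Set V) (Ub : Set V),
      ((⋃ i, W i) ∪ Ub) = Set.univ ∧
      (∀ i, IsMonoDom c d Color.red (W i)) ∧
      IsMonoDom c d Color.blue Ub := by
  classical
  obtain ⟨Y, hYX, hYd⟩ : ∃ Y ⊆ X.erase x₀, Y.card = d :=
    Finset.exists_subset_card_eq (by rw [Finset.card_erase_of_mem hx₀]; omega)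
  have mem_X {y : V} (hy : y ∈ Y) : y ∈ X := Finset.mem_of_mem_erase (hYX hy)
  have ne_x₀ {y : V} (hy : y ∈ Y) : y ≠ x₀ := Finset.ne_of_mem_erase (hYX hy)
  let e : Fin d ≃ Y := (Y.equivFinOfCardEq hYd).symm
  refine ⟨fun i => colorInNbhd c Color.red (e i),
    (⋂ y : Y, colorInNbhd c Color.blue y) ∪ Y, ?_, fun i => ?_, ?_⟩
  · rw [e.surjective.iUnion_comp fun y : Y => colorInNbhd c Color.red y, ← Set.union_assoc,
      iUnion_colorInNbhd_red_union_iInter_blue, Set.univ_union]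
  · exact isMonoDom_colorInNbhd (hloop _ (mem_X (e i).2) (ne_x₀ (e i).2))
  · exact isMonoDom_iInter_colorInNbhd_union hYd.ge (hblue.mono fun _ => mem_X)
      (fun y hy => hblue hx₀ (mem_X hy) (ne_x₀ hy).symm)
      (fun y hy => hblue (mem_X hy) hx₀ (ne_x₀ hy))

end

/-- Lemma: if there is a set `X` of `d+1` vertices with red loops, pairwise joined by
blue edges in both directions, then `V` can be covered by at most `d` red
`d`-dominating sets together with one blue `d`-dominating set. -/
theorem cover_with_blue_clique {V : Type*} (d : ℕ) (hd : 2 ≤ d)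
    (c : V → V → Color) (X : Finset V) (hX : X.card = d + 1)
    (hloop : ∀ x ∈ X, c x x = Color.red)
    (hblue : ∀ u ∈ X, ∀ v ∈ X, u ≠ v → c u v = Color.blue ∧ c v u = Color.blue) :
    ∃ n : ℕ, n ≤ d ∧ ∃ (W : Fin n → Set V) (Ub : Set V),
      ((⋃ i, W i) ∪ Ub) = Set.univ ∧
      (∀ i, IsMonoDom c d Color.red (W i)) ∧
      IsMonoDom c d Color.blue Ub := by
  obtain ⟨x₀, hx₀⟩ : X.Nonempty := Finset.card_pos.mp (by omega)
  exact ⟨d, le_rfl, cover_with_blue_clique_general (by omega) hx₀ (fun x hx _ => hloop x hx)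
    fun u hu v hv huv => (hblue u hu v hv huv).1⟩
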